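/- Let B₁, B₂ be real-valued functions on the primes with B₁(p), B₂(p) ∈ [−1,1] for all primes p, satisfying the pair Sato-Tate equidistribution hypothesis: for all closed intervals I₁, I₂ ⊆ [−1,1], the set {p prime : B₁(p) ∈ I₁ and B₂(p) ∈ I₂} has natural density μ_ST(I₁)·μ_ST(I₂). Define cᵢ(p) = (1 − 2√p·Bᵢ(p))/p for i = 1,2. Then the products c₁(p)·c₂(p) change sign infinitely often; that is, both {p prime : c₁(p)·c₂(p) < 0} and {p prime : c₁(p)·c₂(p) > 0} are infinite sets. -/

import Mathlib

/-!
A box `[a₁, b₁] × [a₂, b₂]` with nonempty interior has positive product Sato–Tate measure, so it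
captures `(B₁ p, B₂ p)` for infinitely many primes `p`: a finite set of primes has density zero
because `π(x) → ∞` (`infinite_of_density_pos`, `muST_pos`). Moreover `cᵢ(p) > 0` as soon as
`Bᵢ(p) ≤ 0`, and `cᵢ(p) < 0` as soon as `Bᵢ(p) ≥ 1/2`, since then `2√p Bᵢ(p) ≥ √p > 1`. The boxes
`[1/2, 1] × [-1, 0]` and `[-1, 0] × [-1, 0]` therefore give infinitely many negative and infinitely
many positive products.
-/

open scoped Classical
open Filter

/-- The prime counting function `π(x)`: the number of primes `≤ x`. -/
noncomputable def primePi (x : ℕ) : ℕ := ((Finset.range (x + 1)).filter Nat.Prime).card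

/-- The number of primes `p ≤ x` lying in the set `S`. -/
noncomputable def primeCount (S : Set ℕ) (x : ℕ) : ℕ :=
  ((Finset.range (x + 1)).filter (fun p => p.Prime ∧ p ∈ S)).card

/-- A set `S` of primes has natural density `δ` if `#{p ∈ S : p ≤ x}/π(x) → δ`. -/
def HasPrimeDensity (S : Set ℕ) (δ : ℝ) : Prop :=
  Filter.Tendsto (fun x : ℕ => (primeCount S x : ℝ) / (primePi x : ℝ)) Filter.atTop (nhds δ)

/-- The Sato–Tate measure of the interval `[a,b]`: `(2/π)∫_a^b √(1-t²) dt`. -/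
noncomputable def muST (a b : ℝ) : ℝ := (2 / Real.pi) * ∫ t in a..b, Real.sqrt (1 - t ^ 2)

theorem muST_pos {a b : ℝ} (ha : -1 ≤ a) (hab : a < b) (hb : b ≤ 1) : 0 < muST a b := by
  unfold muST
  refine mul_pos (div_pos two_pos Real.pi_pos) ?_
  refine intervalIntegral.intervalIntegral_pos_of_pos_on ?_ ?_ hab
  · exact Continuous.intervalIntegrable (by fun_prop) _ _
  · intro x hx
    exact Real.sqrt_pos.mpr (by nlinarith [hx.1, hx.2])

theorem tendsto_primePi : Tendsto (fun x : ℕ => (primePi x : ℝ)) atTop atTop := by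
  have h : primePi = Nat.primeCounting := by
    funext x
    unfold primePi Nat.primeCounting Nat.primeCounting'
    rw [Nat.count_eq_card_filter_range]
  rw [h]
  exact tendsto_natCast_atTop_atTop.comp Nat.tendsto_primeCounting

theorem infinite_of_density_pos {S : Set ℕ} {δ : ℝ} (hS : HasPrimeDensity S δ) (hδ : 0 < δ) :
    {p : ℕ | p.Prime ∧ p ∈ S}.Infinite := by
  intro hfin
  have h0 : HasPrimeDensity S 0 := by
    refine squeeze_zero (fun x => by positivity) (fun x => ?_)
      (tendsto_primePi.const_div_atTop (hfin.toFinset.card : ℝ))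
    gcongr
    exact Finset.card_le_card fun p hp => by
      simpa using (Finset.mem_filter.mp hp).2
  exact hδ.ne' (tendsto_nhds_unique hS h0)

theorem exponent_pos {p : ℕ} (hp : p.Prime) {B : ℝ} (hB : B ≤ 0) :
    0 < (1 - 2 * Real.sqrt p * B) / p := by
  have hp0 : (0 : ℝ) < p := by exact_mod_cast hp.pos
  refine div_pos ?_ hp0
  nlinarith [mul_nonneg (Real.sqrt_nonneg (p : ℝ)) (neg_nonneg.mpr hB)]

theorem exponent_neg {p : ℕ} (hp : p.Prime) {B : ℝ} (hB : 1 / 2 ≤ B) :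
    (1 - 2 * Real.sqrt p * B) / p < 0 := by
  have hp0 : (0 : ℝ) < p := by exact_mod_cast hp.pos
  have hs : 1 < Real.sqrt p := Real.lt_sqrt_of_sq_lt (by simpa using hp.one_lt)
  refine div_neg_of_neg_of_pos ?_ hp0
  nlinarith

theorem stmt_7 (B₁ B₂ c₁ c₂ : ℕ → ℝ)
    (hB₁ : ∀ p : ℕ, p.Prime → B₁ p ∈ Set.Icc (-1 : ℝ) 1)
    (hB₂ : ∀ p : ℕ, p.Prime → B₂ p ∈ Set.Icc (-1 : ℝ) 1)
    (hST : ∀ a₁ b₁ a₂ b₂ : ℝ, -1 ≤ a₁ → a₁ ≤ b₁ → b₁ ≤ 1 → -1 ≤ a₂ → a₂ ≤ b₂ → b₂ ≤ 1 →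
      HasPrimeDensity {p | B₁ p ∈ Set.Icc a₁ b₁ ∧ B₂ p ∈ Set.Icc a₂ b₂}
        (muST a₁ b₁ * muST a₂ b₂))
    (hc₁ : ∀ p : ℕ, p.Prime → c₁ p = (1 - 2 * Real.sqrt p * B₁ p) / p)
    (hc₂ : ∀ p : ℕ, p.Prime → c₂ p = (1 - 2 * Real.sqrt p * B₂ p) / p) :
    {p : ℕ | p.Prime ∧ c₁ p * c₂ p < 0}.Infinite ∧
      {p : ℕ | p.Prime ∧ 0 < c₁ p * c₂ p}.Infinite := by
  constructor
  · refine (infinite_of_density_pos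
      (hST (1 / 2) 1 (-1) 0 (by norm_num) (by norm_num) le_rfl le_rfl (by norm_num) (by norm_num))
      (mul_pos (muST_pos (by norm_num) (by norm_num) le_rfl)
        (muST_pos le_rfl (by norm_num) (by norm_num)))).mono ?_
    rintro p ⟨hp, h₁, h₂⟩
    refine ⟨hp, ?_⟩
    rw [hc₁ p hp, hc₂ p hp]
    exact mul_neg_of_neg_of_pos (exponent_neg hp h₁.1) (exponent_pos hp h₂.2)
  · refine (infinite_of_density_pos
      (hST (-1) 0 (-1) 0 le_rfl (by norm_num) (by norm_num) le_rfl (by norm_num) (by norm_num))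
      (mul_pos (muST_pos le_rfl (by norm_num) (by norm_num))
        (muST_pos le_rfl (by norm_num) (by norm_num)))).mono ?_
    rintro p ⟨hp, h₁, h₂⟩
    refine ⟨hp, ?_⟩
    rw [hc₁ p hp, hc₂ p hp]
    exact mul_pos (exponent_pos hp h₁.2) (exponent_pos hp h₂.2)
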